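/- Let Δ^{K−1} = {q ∈ ℝ^K : q_i ≥ 0 for all i, Σ_i q_i = 1} be the probability simplex, and let ℓ : Δ^{K−1} → ℝ be L-Lipschitz with respect to the Euclidean norm. Let α ∈ ℝ_{>0}^K, α₀ = Σ_{j=1}^K α_j, p = α/α₀, and let π be a Dirichlet(α)-distributed random vector. Then |𝔼[ℓ(π)] − ℓ(p)| ≤ L · √((1 − ‖p‖₂²)/(α₀ + 1)) ≤ L / √(α₀ + 1). -/

import Mathlib

open MeasureTheory ProbabilityTheory

/-- The probability simplex `Δ^{K−1} ⊆ ℝ^K`. -/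
def probSimplex (K : ℕ) : Set (EuclideanSpace ℝ (Fin K)) :=
  {q | (∀ i, 0 ≤ q i) ∧ ∑ i, q i = 1}

/-!
By the Lipschitz bound and Jensen's inequality, `|𝔼 ℓ(π) - ℓ(p)| ≤ L 𝔼‖π - p‖ ≤ L √(𝔼‖π - p‖²)`.
Since `𝔼 π = p`, the last expectation is `𝔼‖π‖² - ‖p‖²`, so everything reduces to the first two
moments of the Dirichlet law. To compute its moments, write the normalising factor `S⁻ⁿ` as
`𝔼 exp(-(S - 1) T)` with `T` an independent Gamma(n, 1) variable; by Tonelli the moment then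
factorises into one-dimensional Gamma integrals, up to a factor depending only on `α₀` and `n`.
That factor is read off from the case of a single coordinate, where the normalised vector is
constant.
-/

open scoped NNReal

section SecondMoment

variable {E Ω : Type*} [NormedAddCommGroup E] [MeasurableSpace Ω] {μ : Measure Ω}
  [IsProbabilityMeasure μ] {X : Ω → E}

lemma integral_norm_sub_integral_sq [InnerProductSpace ℝ E] [CompleteSpace E] (hX : MemLp X 2 μ) :
    ∫ ω, ‖X ω - ∫ ω', X ω' ∂μ‖ ^ 2 ∂μ = ∫ ω, ‖X ω‖ ^ 2 ∂μ - ‖∫ ω, X ω ∂μ‖ ^ 2 := by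
  have hint : Integrable X μ := hX.integrable one_le_two
  set m := ∫ ω, X ω ∂μ with hm
  have hsq : Integrable (fun ω ↦ ‖X ω‖ ^ 2) μ := hX.integrable_norm_pow two_ne_zero
  have hinner : Integrable (fun ω ↦ 2 * inner ℝ m (X ω)) μ := (hint.const_inner m).const_mul 2
  have hsub : Integrable (fun ω ↦ ‖X ω‖ ^ 2 - 2 * inner ℝ m (X ω)) μ := hsq.sub hinner
  simp_rw [norm_sub_sq_real, real_inner_comm m]
  rw [integral_add hsub (integrable_const _),
    integral_sub hsq hinner, integral_const_mul, integral_inner hint, ← hm,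
    real_inner_self_eq_norm_sq, integral_const, probReal_univ, one_smul]
  ring

lemma integral_norm_le_sqrt_integral_norm_sq (hX : MemLp X 2 μ) :
    ∫ ω, ‖X ω‖ ∂μ ≤ √(∫ ω, ‖X ω‖ ^ 2 ∂μ) := by
  refine Real.le_sqrt_of_sq_le (sub_nonneg.1 ?_)
  simpa [variance_eq_sub hX.norm] using variance_nonneg (fun ω ↦ ‖X ω‖) μ

end SecondMoment

section LipschitzApproximation

variable {E F : Type*} [MeasurableSpace E] {ν : Measure E} {s : Set E} {f : E → F} {L : ℝ≥0}

lemma aestronglyMeasurable_of_lipschitzOnWith [PseudoEMetricSpace E] [SecondCountableTopology E]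
    [OpensMeasurableSpace E] [PseudoEMetricSpace F] (hf : LipschitzOnWith L f s)
    (hs : MeasurableSet s) (hν : ∀ᵐ x ∂ν, x ∈ s) : AEStronglyMeasurable f ν := by
  rw [← Measure.restrict_eq_self_of_ae_mem hν]
  exact hf.continuousOn.aestronglyMeasurable hs

lemma norm_integral_sub_le_mul_sqrt_of_lipschitzOnWith [NormedAddCommGroup E]
    [SecondCountableTopology E] [OpensMeasurableSpace E] [NormedAddCommGroup F] [NormedSpace ℝ F]
    [CompleteSpace F] [IsProbabilityMeasure ν] (hf : LipschitzOnWith L f s) (hs : MeasurableSet s)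
    (hν : ∀ᵐ x ∂ν, x ∈ s) (hν₂ : MemLp id 2 ν) {c : E} (hc : c ∈ s) :
    ‖∫ x, f x ∂ν - f c‖ ≤ L * √(∫ x, ‖x - c‖ ^ 2 ∂ν) := by
  have hdev : MemLp (fun x ↦ x - c) 2 ν := hν₂.sub (memLp_const c)
  have hbound : Integrable (fun x ↦ L * ‖x - c‖) ν :=
    (hdev.integrable one_le_two).norm.const_mul (L : ℝ)
  have hle : ∀ᵐ x ∂ν, ‖f x - f c‖ ≤ L * ‖x - c‖ := hν.mono fun x hx ↦ hf.norm_sub_le hx hc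
  have hdiff : Integrable (fun x ↦ f x - f c) ν := hbound.mono'
    ((aestronglyMeasurable_of_lipschitzOnWith hf hs hν).sub aestronglyMeasurable_const) hle
  have hf_int : Integrable f ν :=
    (hdiff.add (integrable_const (f c))).congr (.of_forall fun x ↦ sub_add_cancel (f x) (f c))
  calc
    ‖∫ x, f x ∂ν - f c‖ = ‖∫ x, (f x - f c) ∂ν‖ := by
      simp [integral_sub hf_int (integrable_const (f c))]
    _ ≤ ∫ x, L * ‖x - c‖ ∂ν := norm_integral_le_of_norm_le hbound hle
    _ = L * ∫ x, ‖x - c‖ ∂ν := integral_const_mul _ _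
    _ ≤ L * √(∫ x, ‖x - c‖ ^ 2 ∂ν) := by gcongr; exact integral_norm_le_sqrt_integral_norm_sq hdev

end LipschitzApproximation

section GammaMeasure

lemma Gamma_add_two {x : ℝ} (hx : 0 < x) :
    Real.Gamma (x + 2) = (x + 1) * x * Real.Gamma x := by
  rw [show x + 2 = x + 1 + 1 by ring, Real.Gamma_add_one (by positivity),
    Real.Gamma_add_one hx.ne', mul_assoc]

lemma measurable_gammaPDF (a r : ℝ) : Measurable (gammaPDF a r) :=
  (measurable_gammaPDFReal a r).ennreal_ofReal

lemma ae_gammaMeasure_pos (a r : ℝ) : ∀ᵐ x ∂gammaMeasure a r, 0 < x := by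
  rw [gammaMeasure, ae_withDensity_iff (measurable_gammaPDF a r)]
  filter_upwards [Measure.ae_ne volume (0 : ℝ)] with x hx_ne hx_density
  by_contra hx_nonpos
  exact hx_density (gammaPDF_of_neg (lt_of_le_of_ne (not_lt.mp hx_nonpos) hx_ne))

lemma gammaPDF_mul_rpow_mul_exp {a r s t x : ℝ} (ha : 0 < a) (hr : 0 < r) (has : 0 < a + s)
    (hrt : 0 < r + t) (hx : 0 < x) :
    gammaPDF a r x * ENNReal.ofReal (x ^ s * Real.exp (-(t * x))) =
      ENNReal.ofReal (r ^ a * (Real.Gamma (a + s) / Real.Gamma a) * (r + t) ^ (-(a + s))) *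
        gammaPDF (a + s) (r + t) x := by
  rw [gammaPDF_of_nonneg hx.le, gammaPDF_of_nonneg hx.le, ← ENNReal.ofReal_mul (by positivity),
    ← ENNReal.ofReal_mul (by positivity)]
  congr 1
  rw [show a + s - 1 = (a - 1) + s by ring, Real.rpow_add hx, Real.rpow_neg hrt.le,
    show -((r + t) * x) = -(r * x) + -(t * x) by ring, Real.exp_add]
  have : (r + t) ^ (a + s) ≠ 0 := (Real.rpow_pos_of_pos hrt _).ne'
  have : Real.Gamma (a + s) ≠ 0 := (Real.Gamma_pos_of_pos has).ne'
  field_simp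

lemma lintegral_rpow_mul_exp_gammaMeasure {a r s t : ℝ} (ha : 0 < a) (hr : 0 < r)
    (has : 0 < a + s) (hrt : 0 < r + t) :
    ∫⁻ x, ENNReal.ofReal (x ^ s * Real.exp (-(t * x))) ∂gammaMeasure a r =
      ENNReal.ofReal (r ^ a * (Real.Gamma (a + s) / Real.Gamma a) * (r + t) ^ (-(a + s))) := by
  have htilt : ∀ᵐ x : ℝ, gammaPDF a r x * ENNReal.ofReal (x ^ s * Real.exp (-(t * x))) =
      ENNReal.ofReal (r ^ a * (Real.Gamma (a + s) / Real.Gamma a) * (r + t) ^ (-(a + s))) *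
        gammaPDF (a + s) (r + t) x := by
    filter_upwards [Measure.ae_ne volume (0 : ℝ)] with x hx
    rcases hx.lt_or_gt with hneg | hpos
    · simp [gammaPDF_of_neg hneg]
    · exact gammaPDF_mul_rpow_mul_exp ha hr has hrt hpos
  rw [gammaMeasure,
    lintegral_withDensity_eq_lintegral_mul _ (measurable_gammaPDF a r) (by fun_prop)]
  simp only [Pi.mul_apply]
  rw [lintegral_congr_ae htilt, lintegral_const_mul _ (measurable_gammaPDF _ _),
    lintegral_gammaPDF_eq_one has hrt, mul_one]

lemma lintegral_exp_gammaMeasure_eq_rpow_neg {a s : ℝ} (ha : 0 < a) (hs : 0 < s) :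
    ∫⁻ t, ENNReal.ofReal (Real.exp (-((s - 1) * t))) ∂gammaMeasure a 1 =
      ENNReal.ofReal (s ^ (-a)) := by
  have h := lintegral_rpow_mul_exp_gammaMeasure (s := 0) (t := s - 1) ha one_pos
    (by simpa using ha) (by simpa using hs)
  simpa [(Real.Gamma_pos_of_pos ha).ne'] using h

lemma ofReal_div_rpow_eq_lintegral_gammaMeasure {a c s : ℝ} (ha : 0 < a) (hc : 0 ≤ c)
    (hs : 0 < s) :
    ENNReal.ofReal (c / s ^ a) =
      ∫⁻ t, ENNReal.ofReal (Real.exp t) * ENNReal.ofReal (c * Real.exp (-(t * s)))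
        ∂gammaMeasure a 1 := by
  rw [div_eq_mul_inv, ← Real.rpow_neg hs.le, ENNReal.ofReal_mul hc,
    ← lintegral_exp_gammaMeasure_eq_rpow_neg ha hs, ← lintegral_const_mul _ (by fun_prop)]
  refine lintegral_congr fun t ↦ ?_
  rw [← ENNReal.ofReal_mul hc, ← ENNReal.ofReal_mul (Real.exp_pos t).le, mul_left_comm,
    ← Real.exp_add]
  ring_nf

end GammaMeasure

section PiGammaMeasure

variable {ι : Type*} [Fintype ι] {α s : ι → ℝ}

lemma lintegral_prod_pi {X : ι → Type*} [∀ i, MeasurableSpace (X i)] {μ : ∀ i, Measure (X i)}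
    [∀ i, IsProbabilityMeasure (μ i)] {f : ∀ i, X i → ENNReal} (hf : ∀ i, Measurable (f i)) :
    ∫⁻ x, ∏ i, f i (x i) ∂Measure.pi μ = ∏ i, ∫⁻ y, f i y ∂μ i := by
  rw [lintegral_prod_eq_prod_lintegral_of_indepFun _ (fun i (x : ∀ i, X i) ↦ f i (x i))
    (iIndepFun_pi fun i ↦ (hf i).aemeasurable) fun i ↦ (hf i).comp (measurable_pi_apply i)]
  exact Finset.prod_congr rfl fun i _ ↦ (measurePreserving_eval μ i).lintegral_comp (hf i)

lemma ae_pi_gammaMeasure_pos (hα : ∀ i, 0 < α i) :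
    ∀ᵐ x ∂Measure.pi fun i ↦ gammaMeasure (α i) 1, ∀ i, 0 < x i := by
  have (i : ι) := isProbabilityMeasure_gammaMeasure (hα i) one_pos
  exact Filter.eventually_all.2 fun i ↦
    Measure.tendsto_eval_ae_ae.eventually (ae_gammaMeasure_pos (α i) 1)

lemma lintegral_prod_rpow_mul_exp_pi_gammaMeasure (hα : ∀ i, 0 < α i)
    (hαs : ∀ i, 0 < α i + s i) {t : ℝ} (ht : 0 < 1 + t) :
    ∫⁻ x, ENNReal.ofReal ((∏ i, x i ^ s i) * Real.exp (-(t * ∑ i, x i)))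
        ∂Measure.pi (fun i ↦ gammaMeasure (α i) 1) =
      ENNReal.ofReal ((∏ i, Real.Gamma (α i + s i) / Real.Gamma (α i)) *
        (1 + t) ^ (-(∑ i, α i + ∑ i, s i))) := by
  have (i : ι) := isProbabilityMeasure_gammaMeasure (hα i) one_pos
  have hsplit : ∀ᵐ x ∂Measure.pi fun i ↦ gammaMeasure (α i) 1,
      ENNReal.ofReal ((∏ i, x i ^ s i) * Real.exp (-(t * ∑ i, x i))) =
        ∏ i, ENNReal.ofReal (x i ^ s i * Real.exp (-(t * x i))) := by
    filter_upwards [ae_pi_gammaMeasure_pos hα] with x hx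
    rw [← ENNReal.ofReal_prod_of_nonneg fun i _ ↦ by have := hx i; positivity,
      Finset.prod_mul_distrib, ← Real.exp_sum, Finset.sum_neg_distrib, Finset.mul_sum]
  rw [lintegral_congr_ae hsplit,
    lintegral_prod_pi (f := fun i y ↦ ENNReal.ofReal (y ^ s i * Real.exp (-(t * y))))
      fun i ↦ by fun_prop]
  simp_rw [fun i ↦ lintegral_rpow_mul_exp_gammaMeasure (hα i) one_pos (hαs i) ht]
  rw [← ENNReal.ofReal_prod_of_nonneg fun i _ ↦ by
    have := hα i; have := hαs i; positivity]
  simp only [Real.one_rpow, one_mul]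
  rw [Finset.prod_mul_distrib, ← Real.rpow_sum_of_pos ht, Finset.sum_neg_distrib,
    Finset.sum_add_distrib]

lemma lintegral_prod_rpow_div_sum_rpow_pi_gammaMeasure (hα : ∀ i, 0 < α i)
    (hαs : ∀ i, 0 < α i + s i) (hs : 0 < ∑ i, s i) :
    ∫⁻ x, ENNReal.ofReal ((∏ i, x i ^ s i) / (∑ i, x i) ^ ∑ i, s i)
        ∂Measure.pi (fun i ↦ gammaMeasure (α i) 1) =
      ENNReal.ofReal (∏ i, Real.Gamma (α i + s i) / Real.Gamma (α i)) *
        ∫⁻ t, ENNReal.ofReal (Real.exp t * (1 + t) ^ (-(∑ i, α i + ∑ i, s i)))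
          ∂gammaMeasure (∑ i, s i) 1 := by
  have (i : ι) := isProbabilityMeasure_gammaMeasure (hα i) one_pos
  have := isProbabilityMeasure_gammaMeasure hs one_pos
  have hι : (Finset.univ : Finset ι).Nonempty := Finset.nonempty_of_sum_ne_zero hs.ne'
  have hΓ : 0 ≤ ∏ i, Real.Gamma (α i + s i) / Real.Gamma (α i) :=
    Finset.prod_nonneg fun i _ ↦ by have := hα i; have := hαs i; positivity
  calc
    _ = ∫⁻ x, ∫⁻ t, ENNReal.ofReal (Real.exp t) *
          ENNReal.ofReal ((∏ i, x i ^ s i) * Real.exp (-(t * ∑ i, x i)))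
          ∂gammaMeasure (∑ i, s i) 1 ∂Measure.pi (fun i ↦ gammaMeasure (α i) 1) := by
      refine lintegral_congr_ae ?_
      filter_upwards [ae_pi_gammaMeasure_pos hα] with x hx
      exact ofReal_div_rpow_eq_lintegral_gammaMeasure hs
        (Finset.prod_nonneg fun i _ ↦ Real.rpow_nonneg (hx i).le _)
        (Finset.sum_pos (fun i _ ↦ hx i) hι)
    _ = ∫⁻ t, ENNReal.ofReal (Real.exp t) *
          ∫⁻ x, ENNReal.ofReal ((∏ i, x i ^ s i) * Real.exp (-(t * ∑ i, x i)))
          ∂Measure.pi (fun i ↦ gammaMeasure (α i) 1) ∂gammaMeasure (∑ i, s i) 1 := by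
      rw [lintegral_lintegral_swap (by fun_prop)]
      exact lintegral_congr fun t ↦ lintegral_const_mul _ (by fun_prop)
    _ = _ := by
      rw [← lintegral_const_mul _ (by fun_prop)]
      refine lintegral_congr_ae ?_
      filter_upwards [ae_gammaMeasure_pos (∑ i, s i) 1] with t ht
      rw [lintegral_prod_rpow_mul_exp_pi_gammaMeasure hα hαs (by positivity),
        ← ENNReal.ofReal_mul (Real.exp_pos t).le, ← ENNReal.ofReal_mul hΓ, mul_left_comm]

-- The one-coordinate case of the preceding lemma, where the ratio is identically `1`: this avoids
-- evaluating a Beta integral.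
lemma lintegral_exp_mul_rpow_neg_gammaMeasure {a b : ℝ} (ha : 0 < a) (hb : 0 < b) :
    ∫⁻ t, ENNReal.ofReal (Real.exp t * (1 + t) ^ (-(a + b))) ∂gammaMeasure b 1 =
      ENNReal.ofReal (Real.Gamma a / Real.Gamma (a + b)) := by
  have := isProbabilityMeasure_gammaMeasure ha one_pos
  have hratio : ∫⁻ x : Unit → ℝ, ENNReal.ofReal ((∏ i, x i ^ b) / (∑ i, x i) ^ b)
      ∂Measure.pi (fun _ ↦ gammaMeasure a 1) = 1 := by
    rw [lintegral_congr_ae (g := fun _ ↦ 1)]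
    · simp
    · filter_upwards [ae_pi_gammaMeasure_pos (ι := Unit) fun _ ↦ ha] with x hx
      simp [div_self (Real.rpow_pos_of_pos (hx ()) b).ne']
  have h := lintegral_prod_rpow_div_sum_rpow_pi_gammaMeasure (ι := Unit) (α := fun _ ↦ a)
    (s := fun _ ↦ b) (fun _ ↦ ha) (fun _ ↦ add_pos ha hb) (by simpa using hb)
  simp only [Finset.univ_unique, Finset.sum_singleton, Finset.prod_singleton] at h hratio
  rw [hratio, mul_comm] at h
  have hΓ : 0 < Real.Gamma (a + b) / Real.Gamma a := by positivity
  rw [← inv_div, ENNReal.ofReal_inv_of_pos hΓ]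
  exact ENNReal.eq_inv_of_mul_eq_one_left h.symm

end PiGammaMeasure

section Dirichlet

variable {ι : Type*} [Fintype ι] {α s : ι → ℝ}

/-- The normalisation `x ↦ x / ∑ j, x j` sending positive vectors into the simplex; it turns
independent Gamma variables into a Dirichlet vector, and the parameter `α` into its mean. -/
noncomputable def sumNormalize (x : ι → ℝ) : EuclideanSpace ℝ ι :=
  WithLp.toLp 2 fun i ↦ x i / ∑ j, x j

lemma measurable_sumNormalize : Measurable (sumNormalize : (ι → ℝ) → EuclideanSpace ℝ ι) :=
  (WithLp.measurable_toLp 2 _).comp (by fun_prop)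

variable (ι) in
/-- The standard simplex as a subset of `EuclideanSpace ℝ ι`, so that distances between its points
are Euclidean rather than sup-norm distances. -/
def euclideanSimplex : Set (EuclideanSpace ℝ ι) := WithLp.ofLp ⁻¹' stdSimplex ℝ ι

lemma isCompact_euclideanSimplex : IsCompact (euclideanSimplex ι) :=
  (EuclideanSpace.equiv ι ℝ).toHomeomorph.isCompact_preimage.2 (isCompact_stdSimplex ℝ ι)

lemma sumNormalize_mem_euclideanSimplex [Nonempty ι] {x : ι → ℝ} (hx : ∀ i, 0 < x i) :
    sumNormalize x ∈ euclideanSimplex ι := by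
  have hsum : 0 < ∑ i, x i := Finset.sum_pos (fun i _ ↦ hx i) Finset.univ_nonempty
  refine ⟨fun i ↦ (div_pos (hx i) hsum).le, ?_⟩
  simp only [sumNormalize, ← Finset.sum_div, div_self hsum.ne']

lemma prod_sumNormalize_rpow [Nonempty ι] {x : ι → ℝ} (hx : ∀ i, 0 < x i) (s : ι → ℝ) :
    ∏ i, sumNormalize x i ^ s i = (∏ i, x i ^ s i) / (∑ i, x i) ^ ∑ i, s i := by
  have hsum : 0 < ∑ i, x i := Finset.sum_pos (fun i _ ↦ hx i) Finset.univ_nonempty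
  simp only [sumNormalize, Real.div_rpow (hx _).le hsum.le, Finset.prod_div_distrib,
    Real.rpow_sum_of_pos hsum]

/-- The Dirichlet distribution with parameter `α`, encoded through its Gamma representation because
it has no density with respect to Lebesgue measure on the ambient space. -/
noncomputable def dirichletMeasure (α : ι → ℝ) : Measure (EuclideanSpace ℝ ι) :=
  (Measure.pi fun i ↦ gammaMeasure (α i) 1).map sumNormalize

lemma hasLaw_sumNormalize {Ω : Type*} [MeasurableSpace Ω] {μ : Measure Ω} {G : ι → Ω → ℝ}
    (hG : ∀ i, HasLaw (G i) (gammaMeasure (α i) 1) μ) (hindep : iIndepFun G μ) :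
    HasLaw (fun ω ↦ sumNormalize fun i ↦ G i ω) (dirichletMeasure α) μ :=
  HasLaw.fun_comp ⟨measurable_sumNormalize.aemeasurable, rfl⟩ (hindep.hasLaw_pi hG)

lemma isProbabilityMeasure_dirichletMeasure (hα : ∀ i, 0 < α i) :
    IsProbabilityMeasure (dirichletMeasure α) := by
  have (i : ι) := isProbabilityMeasure_gammaMeasure (hα i) one_pos
  exact Measure.isProbabilityMeasure_map measurable_sumNormalize.aemeasurable

lemma ae_dirichletMeasure_mem_euclideanSimplex [Nonempty ι] (hα : ∀ i, 0 < α i) :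
    ∀ᵐ q ∂dirichletMeasure α, q ∈ euclideanSimplex ι := by
  have hmeas : MeasurableSet {q | q ∈ euclideanSimplex ι} :=
    isCompact_euclideanSimplex.measurableSet
  rw [dirichletMeasure, ae_map_iff measurable_sumNormalize.aemeasurable hmeas]
  filter_upwards [ae_pi_gammaMeasure_pos hα] with x hx
  exact sumNormalize_mem_euclideanSimplex hx

lemma integral_prod_rpow_dirichletMeasure (hα : ∀ i, 0 < α i) (hαs : ∀ i, 0 < α i + s i)
    (hs : 0 < ∑ i, s i) :
    ∫ q, ∏ i, q i ^ s i ∂dirichletMeasure α =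
      (∏ i, Real.Gamma (α i + s i) / Real.Gamma (α i)) *
        (Real.Gamma (∑ i, α i) / Real.Gamma (∑ i, α i + ∑ i, s i)) := by
  have hne : (Finset.univ : Finset ι).Nonempty := Finset.nonempty_of_sum_ne_zero hs.ne'
  have : Nonempty ι := Finset.univ_nonempty_iff.1 hne
  have hα₀ : 0 < ∑ i, α i := Finset.sum_pos (fun i _ ↦ hα i) hne
  have hΓprod : 0 ≤ ∏ i, Real.Gamma (α i + s i) / Real.Gamma (α i) :=
    Finset.prod_nonneg fun i _ ↦ by have := hα i; have := hαs i; positivity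
  have hΓsum : 0 ≤ Real.Gamma (∑ i, α i) / Real.Gamma (∑ i, α i + ∑ i, s i) := by positivity
  have hnonneg : ∀ᵐ q ∂dirichletMeasure α, 0 ≤ ∏ i, q i ^ s i := by
    filter_upwards [ae_dirichletMeasure_mem_euclideanSimplex hα] with q hq
    exact Finset.prod_nonneg fun i _ ↦ Real.rpow_nonneg (hq.1 i) _
  have hmeas : Measurable fun q : EuclideanSpace ℝ ι ↦ ∏ i, q i ^ s i := by fun_prop
  have hratio : ∀ᵐ x ∂Measure.pi fun i ↦ gammaMeasure (α i) 1,
      ENNReal.ofReal (∏ i, sumNormalize x i ^ s i) =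
        ENNReal.ofReal ((∏ i, x i ^ s i) / (∑ i, x i) ^ ∑ i, s i) := by
    filter_upwards [ae_pi_gammaMeasure_pos hα] with x hx
    rw [prod_sumNormalize_rpow hx]
  rw [integral_eq_lintegral_of_nonneg_ae hnonneg hmeas.aestronglyMeasurable, dirichletMeasure,
    lintegral_map (by fun_prop) measurable_sumNormalize, lintegral_congr_ae hratio,
    lintegral_prod_rpow_div_sum_rpow_pi_gammaMeasure hα hαs hs,
    lintegral_exp_mul_rpow_neg_gammaMeasure hα₀ hs, ← ENNReal.ofReal_mul hΓprod,
    ENNReal.toReal_ofReal (mul_nonneg hΓprod hΓsum)]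

lemma integral_rpow_dirichletMeasure (hα : ∀ i, 0 < α i) (i : ι) {c : ℝ} (hc : 0 < c) :
    ∫ q, q i ^ c ∂dirichletMeasure α =
      Real.Gamma (α i + c) / Real.Gamma (α i) *
        (Real.Gamma (∑ j, α j) / Real.Gamma (∑ j, α j + c)) := by
  classical
  have hαc (j : ι) : 0 < α j + (Pi.single i c : ι → ℝ) j :=
    add_pos_of_pos_of_nonneg (hα j) (by rw [Pi.single_apply]; split_ifs <;> positivity)
  have hΓ (j : ι) : Real.Gamma (α j) ≠ 0 := (Real.Gamma_pos_of_pos (hα j)).ne'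
  have hprod : ∏ j, Real.Gamma (α j + (Pi.single i c : ι → ℝ) j) / Real.Gamma (α j) =
      Real.Gamma (α i + c) / Real.Gamma (α i) := by
    rw [Finset.prod_eq_single_of_mem i (Finset.mem_univ i) fun j _ hj ↦ by simp [hj, hΓ],
      Pi.single_eq_same]
  have h := integral_prod_rpow_dirichletMeasure hα hαc (by simpa using hc)
  rw [hprod] at h
  simpa [Pi.single_apply, pow_ite] using h

lemma integral_eval_dirichletMeasure (hα : ∀ i, 0 < α i) (i : ι) :
    ∫ q, q i ∂dirichletMeasure α = α i / ∑ j, α j := by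
  have hα₀ : 0 < ∑ j, α j := Finset.sum_pos (fun j _ ↦ hα j) ⟨i, Finset.mem_univ i⟩
  have := (Real.Gamma_pos_of_pos (hα i)).ne'
  have := (Real.Gamma_pos_of_pos hα₀).ne'
  have h := integral_rpow_dirichletMeasure hα i one_pos
  simp only [Real.rpow_one, Real.Gamma_add_one (hα i).ne', Real.Gamma_add_one hα₀.ne'] at h
  rw [h]
  field_simp

lemma integral_eval_sq_dirichletMeasure (hα : ∀ i, 0 < α i) (i : ι) :
    ∫ q, q i ^ 2 ∂dirichletMeasure α =
      α i * (α i + 1) / ((∑ j, α j) * (∑ j, α j + 1)) := by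
  have hα₀ : 0 < ∑ j, α j := Finset.sum_pos (fun j _ ↦ hα j) ⟨i, Finset.mem_univ i⟩
  have := (Real.Gamma_pos_of_pos (hα i)).ne'
  have := (Real.Gamma_pos_of_pos hα₀).ne'
  have h := integral_rpow_dirichletMeasure hα i two_pos
  simp only [Real.rpow_two, Gamma_add_two (hα i), Gamma_add_two hα₀] at h
  rw [h]
  field_simp

lemma memLp_id_dirichletMeasure [Nonempty ι] (hα : ∀ i, 0 < α i) (p : ENNReal) :
    MemLp id p (dirichletMeasure α) := by
  have := isProbabilityMeasure_dirichletMeasure hα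
  obtain ⟨C, hC⟩ := isCompact_euclideanSimplex (ι := ι).isBounded.exists_norm_le
  exact .of_bound aestronglyMeasurable_id C
    ((ae_dirichletMeasure_mem_euclideanSimplex hα).mono hC)

lemma integral_id_dirichletMeasure [Nonempty ι] (hα : ∀ i, 0 < α i) :
    ∫ q, q ∂dirichletMeasure α = sumNormalize α := by
  have := isProbabilityMeasure_dirichletMeasure hα
  have hint := (memLp_id_dirichletMeasure hα 1).integrable le_rfl
  ext i
  exact (eval_integral_piLp hint.eval_piLp i).trans (integral_eval_dirichletMeasure hα i)

lemma integral_norm_sq_dirichletMeasure [Nonempty ι] (hα : ∀ i, 0 < α i) :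
    ∫ q, ‖q‖ ^ 2 ∂dirichletMeasure α =
      (1 + (∑ i, α i) * ‖sumNormalize α‖ ^ 2) / (∑ i, α i + 1) := by
  have := isProbabilityMeasure_dirichletMeasure hα
  have hα₀ : 0 < ∑ i, α i := Finset.sum_pos (fun i _ ↦ hα i) Finset.univ_nonempty
  have hint (i : ι) : Integrable (fun q : EuclideanSpace ℝ ι ↦ q i ^ 2) (dirichletMeasure α) :=
    ((memLp_id_dirichletMeasure hα 2).eval_piLp i).integrable_sq
  simp_rw [EuclideanSpace.real_norm_sq_eq]
  rw [integral_finsetSum _ fun i _ ↦ hint i]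
  simp_rw [integral_eval_sq_dirichletMeasure hα, sumNormalize, div_pow]
  rw [← Finset.sum_div, ← Finset.sum_div]
  simp_rw [mul_add, mul_one, ← sq, Finset.sum_add_distrib]
  field_simp
  ring

lemma integral_norm_sub_sq_dirichletMeasure [Nonempty ι] (hα : ∀ i, 0 < α i) :
    ∫ q, ‖q - sumNormalize α‖ ^ 2 ∂dirichletMeasure α =
      (1 - ‖sumNormalize α‖ ^ 2) / (∑ i, α i + 1) := by
  have := isProbabilityMeasure_dirichletMeasure hα
  have hα₀ : 0 < ∑ i, α i := Finset.sum_pos (fun i _ ↦ hα i) Finset.univ_nonempty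
  have h := integral_norm_sub_integral_sq (memLp_id_dirichletMeasure hα 2)
  simp only [id, integral_id_dirichletMeasure hα, integral_norm_sq_dirichletMeasure hα] at h
  rw [h]
  field_simp
  ring

end Dirichlet

lemma sqrt_one_sub_sq_div_le (x : ℝ) {c : ℝ} (hc : 0 ≤ c) :
    √((1 - x ^ 2) / c) ≤ 1 / √c := by
  rw [one_div, ← Real.sqrt_inv, ← one_div]
  gcongr
  exact sub_le_self 1 (sq_nonneg x)

theorem lipschitz_plugin_approximation_general {ι : Type*} [Fintype ι] [Nonempty ι]
    {F : Type*} [NormedAddCommGroup F] [NormedSpace ℝ F] [CompleteSpace F]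
    {Ω : Type*} [MeasurableSpace Ω] {μ : Measure Ω}
    {f : EuclideanSpace ℝ ι → F} {L : ℝ≥0} (hf : LipschitzOnWith L f (euclideanSimplex ι))
    {α : ι → ℝ} (hα : ∀ i, 0 < α i)
    {π : Ω → EuclideanSpace ℝ ι} (hπ : HasLaw π (dirichletMeasure α) μ) :
    ‖∫ ω, f (π ω) ∂μ - f (sumNormalize α)‖ ≤
        L * √((1 - ‖sumNormalize α‖ ^ 2) / (∑ i, α i + 1)) ∧
      L * √((1 - ‖sumNormalize α‖ ^ 2) / (∑ i, α i + 1)) ≤ L / √(∑ i, α i + 1) := by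
  have := isProbabilityMeasure_dirichletMeasure hα
  have hα₀ : 0 < ∑ i, α i := Finset.sum_pos (fun i _ ↦ hα i) Finset.univ_nonempty
  have hsimplex : MeasurableSet (euclideanSimplex ι) := isCompact_euclideanSimplex.measurableSet
  have hmem := ae_dirichletMeasure_mem_euclideanSimplex hα
  have hlaw : ∫ ω, f (π ω) ∂μ = ∫ q, f q ∂dirichletMeasure α :=
    hπ.integral_comp (aestronglyMeasurable_of_lipschitzOnWith hf hsimplex hmem)
  constructor
  · rw [hlaw, ← integral_norm_sub_sq_dirichletMeasure hα]
    exact norm_integral_sub_le_mul_sqrt_of_lipschitzOnWith hf hsimplex hmem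
      (memLp_id_dirichletMeasure hα 2) (sumNormalize_mem_euclideanSimplex hα)
  · rw [div_eq_mul_one_div (L : ℝ)]
    gcongr
    exact sqrt_one_sub_sq_div_le _ (by positivity)

/-- **Lipschitz plug-in approximation.**
Let `ℓ` be `L`-Lipschitz on the probability simplex (w.r.t. the Euclidean
norm), let `π` be a Dirichlet(α)-distributed random vector, realized as
`π_i = G_i / (G_1 + ⋯ + G_K)` with `G_i` independent Gamma(α_i, 1), and let
`p = α/α₀`.  Then
`|𝔼[ℓ(π)] − ℓ(p)| ≤ L √((1 − ‖p‖₂²)/(α₀+1)) ≤ L/√(α₀+1)`. -/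
theorem lipschitz_plugin_approximation {K : ℕ} (hK : 0 < K)
    {Ω : Type*} [MeasurableSpace Ω] (μ : Measure Ω) [IsProbabilityMeasure μ]
    (ℓ : EuclideanSpace ℝ (Fin K) → ℝ) (L : ℝ) (hL : 0 ≤ L)
    (hlip : ∀ u ∈ probSimplex K, ∀ v ∈ probSimplex K, |ℓ u - ℓ v| ≤ L * ‖u - v‖)
    (α : Fin K → ℝ) (hα : ∀ i, 0 < α i)
    (G : Fin K → Ω → ℝ) (hGmeas : ∀ i, Measurable (G i))
    (hGindep : iIndepFun G μ)
    (hGlaw : ∀ i, μ.map (G i) = gammaMeasure (α i) 1)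
    (π : Ω → EuclideanSpace ℝ (Fin K))
    (hπ : ∀ ω i, π ω i = G i ω / ∑ j, G j ω)
    (α₀ : ℝ) (hα₀ : α₀ = ∑ j, α j)
    (p : EuclideanSpace ℝ (Fin K)) (hp : ∀ i, p i = α i / α₀) :
    |(∫ ω, ℓ (π ω) ∂μ) - ℓ p| ≤ L * Real.sqrt ((1 - ‖p‖ ^ 2) / (α₀ + 1)) ∧
      L * Real.sqrt ((1 - ‖p‖ ^ 2) / (α₀ + 1)) ≤ L / Real.sqrt (α₀ + 1) := by
  have : Nonempty (Fin K) := Fin.pos_iff_nonempty.1 hK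
  obtain rfl : p = sumNormalize α := by ext i; rw [hp, hα₀]; rfl
  obtain rfl : π = fun ω ↦ sumNormalize fun i ↦ G i ω := by ext ω i; exact hπ ω i
  lift L to ℝ≥0 using hL
  have hℓ : LipschitzOnWith L ℓ (euclideanSimplex (Fin K)) :=
    LipschitzOnWith.of_dist_le_mul fun u hu v hv ↦ by
      simpa only [dist_eq_norm, Real.norm_eq_abs] using hlip u hu v hv
  subst hα₀
  exact lipschitz_plugin_approximation_general hℓ hα
    (hasLaw_sumNormalize (fun i ↦ ⟨(hGmeas i).aemeasurable, hGlaw i⟩) hGindep)
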